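/- Let (G_k)_{k=1}^N be arbitrary operators, with G_k acting on H_k, and let G = Σ_{k=1}^N (extension of G_k to H). Then for every density matrix ρ on H, the coherent part of the variance satisfies Var_ρ(G) − Σ_{k=1}^N Var_{ρ_k}(G_k) ≤ 2·Σ_{k≠ℓ} ‖G_k‖_∞·‖G_ℓ‖_∞·√(min(s_k, s_ℓ)), where the sum runs over all ordered pairs (k,ℓ) with k ≠ ℓ. -/

import Mathlib

open scoped BigOperators Kronecker Matrix ComplexOrder

noncomputable section
namespace Paper

/-- A density matrix: a positive semidefinite operator of trace one. -/
def IsDensityMatrix {n : Type*} [Fintype n] (ρ : Matrix n n ℂ) : Prop :=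
  ρ.PosSemidef ∧ ρ.trace = 1

/-- The operator norm `‖A‖_∞` (largest singular value) of a matrix,
as the operator norm of the induced map on Euclidean space. -/
noncomputable def opNorm {n : Type*} [Fintype n] [DecidableEq n] (A : Matrix n n ℂ) : ℝ :=
  ‖LinearMap.toContinuousLinearMap (Matrix.toEuclideanLin A)‖

/-- Von Neumann entropy `−∑ λ ln λ` over the eigenvalues; since `Real.log 0 = 0`
in Mathlib, the convention `0 · ln 0 = 0` is automatic. -/
noncomputable def entropy {n : Type*} [Fintype n] [DecidableEq n] (σ : Matrix n n ℂ) : ℝ :=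
  if h : σ.IsHermitian then -∑ i, h.eigenvalues i * Real.log (h.eigenvalues i) else 0

/-- The variance `Var_ρ(A) = Tr[ρ A† A] − |Tr[ρ A]|²`. -/
noncomputable def variance {n : Type*} [Fintype n] (ρ A : Matrix n n ℂ) : ℝ :=
  (ρ * (Aᴴ * A)).trace.re - ‖(ρ * A).trace‖ ^ 2

/-- The trace norm `‖A‖₁ = Tr √(A†A)`: the sum of the singular values. -/
noncomputable def traceNorm {n : Type*} [Fintype n] [DecidableEq n] (A : Matrix n n ℂ) : ℝ :=
  ∑ i, Real.sqrt ((Matrix.posSemidef_conjTranspose_mul_self A).1.eigenvalues i)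

/-- The pure state `|v⟩⟨v|` associated with a vector `v`. -/
def pureState {n : Type*} (v : n → ℂ) : Matrix n n ℂ :=
  Matrix.of fun x y => v x * (starRingEnd ℂ) (v y)

/-- The expectation value `⟨v|M|v⟩`. -/
noncomputable def expval {n : Type*} [Fintype n] (M : Matrix n n ℂ) (v : n → ℂ) : ℂ :=
  ∑ x, ∑ y, (starRingEnd ℂ) (v x) * M x y * v y

variable {N : ℕ} {d : Fin N → Type*} [∀ k, Fintype (d k)] [∀ k, DecidableEq (d k)]

/-- Extension of a local operator on the `k`-th factor to the `N`-fold tensor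
product `H = H_1 ⊗ ⋯ ⊗ H_N`, tensoring with the identity on every other factor.
(The tensor product is realized with index set `∀ j, d j`.) -/
def extendAt (k : Fin N) (A : Matrix (d k) (d k) ℂ) : Matrix (∀ j, d j) (∀ j, d j) ℂ :=
  Matrix.of fun x y => if ∀ j, j ≠ k → x j = y j then A (x k) (y k) else 0

/-- Reduced density matrix on the `k`-th factor: partial trace over all other factors. -/
noncomputable def reduce (k : Fin N) (ρ : Matrix (∀ j, d j) (∀ j, d j) ℂ) :
    Matrix (d k) (d k) ℂ :=
  Matrix.of fun a b => ∑ x : ∀ j, d j, if x k = a then ρ x (Function.update x k b) else 0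

/-!
The coherent part of the variance is the sum of the covariances `Tr[ρ X Y] − Tr[ρ X] Tr[ρ Y]` of
operators on different factors. Let `X` act on the factor `k`, let `Y` act on another one, and let
`P` be the projection onto an eigenvector of `ρ_k` for its largest eigenvalue `p`. Every eigenvalue
`λ ≤ p` satisfies `−ln λ ≥ 1 − λ ≥ 1 − p`, whence `1 − p ≤ s_k`. As `Y` commutes with `X` and `P`,
for centered `X` the covariance is the expectation value of `X Y = (1 − P) Y X + (P Y) (P X)`, and
Cauchy–Schwarz for `⟨U, V⟩ = Tr[ρ U† V]` bounds each term by `√(1 − p) ‖X‖ ‖Y‖`: the first one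
because `Tr[ρ_k (1 − P)] = 1 − p`, the second one because a centered operator satisfies
`p Tr[ρ_k X† P X] ≤ (1 − p) Tr[ρ_k X X†]`.
-/

section StateNorm

variable {n : Type*} [Fintype n] {ρ : Matrix n n ℂ}

/-- The seminorm `√Tr[ρ X† X]` of the GNS construction, defined on the operators `X` by a positive
semidefinite `ρ`. -/
noncomputable def stateNorm (ρ X : Matrix n n ℂ) : ℝ :=
  √(ρ * (Xᴴ * X)).trace.re

lemma stateNorm_nonneg (ρ X : Matrix n n ℂ) : 0 ≤ stateNorm ρ X := Real.sqrt_nonneg _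

lemma trace_mul_conjTranspose_mul_self_nonneg (hρ : ρ.PosSemidef) (X : Matrix n n ℂ) :
    0 ≤ (ρ * (Xᴴ * X)).trace := by
  have h := (hρ.mul_mul_conjTranspose_same X).trace_nonneg
  rwa [mul_assoc, Matrix.trace_mul_comm, mul_assoc] at h

lemma stateNorm_sq (hρ : ρ.PosSemidef) (X : Matrix n n ℂ) :
    stateNorm ρ X ^ 2 = (ρ * (Xᴴ * X)).trace.re :=
  Real.sq_sqrt (Complex.le_def.1 (trace_mul_conjTranspose_mul_self_nonneg hρ X)).1

lemma stateNorm_add_smul_sq {σ : Matrix n n ℂ} (hρ : ρ.PosSemidef) (hσ : σ.PosSemidef) {p : ℝ}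
    (hp : 0 ≤ p) (X : Matrix n n ℂ) :
    stateNorm (ρ + (p : ℂ) • σ) X ^ 2 = stateNorm ρ X ^ 2 + p * stateNorm σ X ^ 2 := by
  rw [stateNorm_sq (hρ.add (hσ.smul (by exact_mod_cast hp))), stateNorm_sq hρ, stateNorm_sq hσ]
  simp [add_mul]

lemma trace_mul_conjTranspose (hρ : ρ.IsHermitian) (X : Matrix n n ℂ) :
    (ρ * Xᴴ).trace = star (ρ * X).trace := by
  rw [← Matrix.trace_conjTranspose, Matrix.conjTranspose_mul, hρ.eq, Matrix.trace_mul_comm]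

lemma norm_trace_mul_conjTranspose_mul_le (hρ : ρ.PosSemidef) (X Y : Matrix n n ℂ) :
    ‖(ρ * (Xᴴ * Y)).trace‖ ≤ stateNorm ρ X * stateNorm ρ Y := by
  let _ : SeminormedAddCommGroup (Matrix n n ℂ) := ρ.toMatrixSeminormedAddCommGroup hρ
  let _ : InnerProductSpace ℂ (Matrix n n ℂ) := ρ.toMatrixInnerProductSpace hρ
  have inner_eq (U V : Matrix n n ℂ) : inner ℂ U V = (ρ * (Uᴴ * V)).trace := by
    change (V * ρ * Uᴴ).trace = _
    rw [mul_assoc, Matrix.trace_mul_comm, mul_assoc]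
  have norm_eq (U : Matrix n n ℂ) : stateNorm ρ U = ‖U‖ := by
    rw [stateNorm, ← inner_eq, norm_eq_sqrt_re_inner (𝕜 := ℂ) U]
    rfl
  rw [norm_eq, norm_eq, ← inner_eq]
  exact norm_inner_le_norm X Y

lemma stateNorm_of_isStarProjection (ρ : Matrix n n ℂ) {P : Matrix n n ℂ}
    (hP : IsStarProjection P) : stateNorm ρ P = √(ρ * P).trace.re := by
  rw [stateNorm, ← Matrix.star_eq_conjTranspose, hP.isSelfAdjoint.star_eq,
    hP.isIdempotentElem.eq]

variable [DecidableEq n]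

lemma stateNorm_one (ρ : Matrix n n ℂ) : stateNorm ρ 1 = √ρ.trace.re := by
  rw [stateNorm_of_isStarProjection ρ (.one _), mul_one]

open scoped Matrix.Norms.L2Operator MatrixOrder

lemma stateNorm_mul_le (hρ : ρ.PosSemidef) (X Y : Matrix n n ℂ) :
    stateNorm ρ (X * Y) ≤ ‖X‖ * stateNorm ρ Y := by
  have hle : star Y * (star X * X) * Y ≤ ‖star X * X‖ • (star Y * Y) :=
    CStarAlgebra.star_left_conjugate_le_norm_smul (hb := .star_mul_self X)
  obtain ⟨C, hC⟩ := CStarAlgebra.nonneg_iff_eq_star_mul_self.1 (sub_nonneg.2 hle)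
  have htr := (Complex.le_def.1 (trace_mul_conjTranspose_mul_self_nonneg hρ C)).1
  rw [← Matrix.star_eq_conjTranspose, ← hC, Complex.zero_re, CStarRing.norm_star_mul_self, mul_sub,
    Matrix.trace_sub, Complex.sub_re, mul_smul_comm, Matrix.trace_smul, Complex.smul_re,
    smul_eq_mul, sub_nonneg] at htr
  refine abs_le_of_sq_le_sq' ?_ (mul_nonneg (norm_nonneg X) (stateNorm_nonneg ρ Y)) |>.2
  rw [mul_pow, sq ‖X‖, stateNorm_sq hρ, stateNorm_sq hρ, Matrix.conjTranspose_mul]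
  simpa only [Matrix.star_eq_conjTranspose, mul_assoc] using htr

lemma stateNorm_le_norm (hρ : IsDensityMatrix ρ) (X : Matrix n n ℂ) : stateNorm ρ X ≤ ‖X‖ := by
  simpa [stateNorm_one, hρ.2] using stateNorm_mul_le hρ.1 X 1

lemma norm_trace_mul_mul_le_of_commute (hρ : ρ.PosSemidef) {P X Y : Matrix n n ℂ}
    (hP : IsStarProjection P) (hXY : Commute X Y) (hPY : Commute P Y) :
    ‖(ρ * (X * Y)).trace‖ ≤
      (stateNorm ρ (1 - P) * stateNorm ρ X + stateNorm ρ P * stateNorm ρ (P * X)) * ‖Y‖ := by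
  have hPs : Pᴴ = P := hP.isSelfAdjoint
  have hPYP : P * Y * P = P * Y := by rw [mul_assoc, ← hPY.eq, ← mul_assoc, hP.isIdempotentElem.eq]
  have split : X * Y = (1 - P)ᴴ * (Y * X) + (Yᴴ * P)ᴴ * (P * X) := by
    rw [hXY.eq, Matrix.conjTranspose_sub, Matrix.conjTranspose_one, Matrix.conjTranspose_mul,
      Matrix.conjTranspose_conjTranspose, hPs, ← mul_assoc (P * Y), hPYP, sub_mul, one_mul,
      mul_assoc, sub_add_cancel]
  rw [split, mul_add, Matrix.trace_add]
  calc _ ≤ ‖(ρ * ((1 - P)ᴴ * (Y * X))).trace‖ + ‖(ρ * ((Yᴴ * P)ᴴ * (P * X))).trace‖ :=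
        norm_add_le _ _
    _ ≤ stateNorm ρ (1 - P) * stateNorm ρ (Y * X)
        + stateNorm ρ (Yᴴ * P) * stateNorm ρ (P * X) :=
      add_le_add (norm_trace_mul_conjTranspose_mul_le hρ _ _)
        (norm_trace_mul_conjTranspose_mul_le hρ _ _)
    _ ≤ stateNorm ρ (1 - P) * (‖Y‖ * stateNorm ρ X)
        + ‖Y‖ * stateNorm ρ P * stateNorm ρ (P * X) := by
      gcongr
      · exact stateNorm_nonneg _ _
      · exact stateNorm_mul_le hρ Y X
      · exact stateNorm_nonneg _ _
      · simpa only [Matrix.l2_opNorm_conjTranspose] using stateNorm_mul_le hρ Yᴴ P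
    _ = _ := by ring

end StateNorm

section Covariance

variable {n : Type*} [Fintype n] {ρ : Matrix n n ℂ}

/-- The covariance `Tr[ρ X Y] − Tr[ρ X] Tr[ρ Y]`, bilinear in `X` and `Y`: no adjoint is taken. -/
noncomputable def covariance (ρ X Y : Matrix n n ℂ) : ℂ :=
  (ρ * (X * Y)).trace - (ρ * X).trace * (ρ * Y).trace

lemma covariance_comm_of_commute (ρ : Matrix n n ℂ) {X Y : Matrix n n ℂ} (h : Commute X Y) :
    covariance ρ X Y = covariance ρ Y X := by
  rw [covariance, covariance, h.eq, mul_comm (ρ * X).trace]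

lemma covariance_sum_sum {ι κ : Type*} [Fintype ι] [Fintype κ] (ρ : Matrix n n ℂ)
    (X : ι → Matrix n n ℂ) (Y : κ → Matrix n n ℂ) :
    covariance ρ (∑ k, X k) (∑ l, Y l) = ∑ k, ∑ l, covariance ρ (X k) (Y l) := by
  simp only [covariance, Finset.sum_sub_distrib, Finset.mul_sum, Finset.sum_mul,
    Matrix.trace_sum]
  rw [Finset.sum_comm]
  congr 1
  rw [Finset.sum_comm]

lemma variance_eq_re_covariance (hρ : ρ.IsHermitian) (X : Matrix n n ℂ) :
    variance ρ X = (covariance ρ Xᴴ X).re := by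
  rw [variance, covariance, trace_mul_conjTranspose hρ, Complex.sub_re, Complex.star_def,
    Complex.conj_mul', ← Complex.ofReal_pow, Complex.ofReal_re]

variable [DecidableEq n]

/-- The operator `X` shifted by a scalar so as to have zero expectation value in `ρ`. -/
noncomputable def centered (ρ X : Matrix n n ℂ) : Matrix n n ℂ := X - (ρ * X).trace • 1

lemma trace_mul_centered (hρ : ρ.trace = 1) (X : Matrix n n ℂ) :
    (ρ * centered ρ X).trace = 0 := by
  simp [centered, mul_sub, hρ]

lemma conjTranspose_centered (hρ : ρ.IsHermitian) (X : Matrix n n ℂ) :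
    (centered ρ X)ᴴ = centered ρ Xᴴ := by
  simp [centered, trace_mul_conjTranspose hρ]

lemma covariance_eq_trace_centered_mul (ρ X Y : Matrix n n ℂ) :
    covariance ρ X Y = (ρ * (centered ρ X * Y)).trace := by
  simp [covariance, centered, sub_mul, mul_sub]

lemma stateNorm_centered_sq (hρ : IsDensityMatrix ρ) (X : Matrix n n ℂ) :
    stateNorm ρ (centered ρ X) ^ 2 = variance ρ X := by
  rw [stateNorm_sq hρ.1, variance_eq_re_covariance hρ.1.1, covariance_eq_trace_centered_mul,
    conjTranspose_centered hρ.1.1]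
  nth_rw 2 [centered]
  simp [mul_sub, trace_mul_centered hρ.2]

open scoped Matrix.Norms.L2Operator

lemma stateNorm_centered_le_norm (hρ : IsDensityMatrix ρ) (X : Matrix n n ℂ) :
    stateNorm ρ (centered ρ X) ≤ ‖X‖ := by
  refine le_trans ?_ (stateNorm_le_norm hρ X)
  refine (sq_le_sq₀ (stateNorm_nonneg ρ _) (stateNorm_nonneg ρ X)).1 ?_
  rw [stateNorm_centered_sq hρ, variance, ← stateNorm_sq hρ.1]
  exact sub_le_self _ (sq_nonneg _)

end Covariance

section PureState

variable {n : Type*}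

lemma pureState_eq_vecMulVec (v : n → ℂ) : pureState v = Matrix.vecMulVec v (star v) := rfl

lemma posSemidef_pureState [Finite n] (v : n → ℂ) : (pureState v).PosSemidef :=
  Matrix.posSemidef_vecMulVec_self_star v

variable [Fintype n] {σ : Matrix n n ℂ} {v : n → ℂ} {p : ℝ}

lemma pureState_mul_mul_pureState (v : n → ℂ) (A : Matrix n n ℂ) :
    pureState v * A * pureState v = (pureState v * A).trace • pureState v := by
  rw [pureState_eq_vecMulVec, Matrix.vecMulVec_mul, Matrix.vecMulVec_mul_vecMulVec,
    Matrix.trace_vecMulVec, dotProduct_comm, Matrix.vecMulVec_smul]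

lemma isStarProjection_pureState (hv : star v ⬝ᵥ v = 1) :
    IsStarProjection (pureState v) where
  isIdempotentElem := by
    rw [IsIdempotentElem, pureState_eq_vecMulVec, Matrix.vecMulVec_mul_vecMulVec, hv, one_smul]
  isSelfAdjoint := (posSemidef_pureState v).1

lemma posSemidef_sub_smul_pureState (hσ : σ.PosSemidef) (hv : star v ⬝ᵥ v = 1)
    (hσv : σ *ᵥ v = (p : ℂ) • v) : (σ - (p : ℂ) • pureState v).PosSemidef := by
  classical
  have hP := isStarProjection_pureState hv
  have hPs : (pureState v)ᴴ = pureState v := hP.isSelfAdjoint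
  have hσP : σ * pureState v = (p : ℂ) • pureState v := by
    rw [pureState_eq_vecMulVec, Matrix.mul_vecMulVec, hσv, Matrix.smul_vecMulVec]
  have hPσ : pureState v * σ = (p : ℂ) • pureState v := by
    simpa [hPs, hσ.1.eq] using congrArg Matrix.conjTranspose hσP
  convert hσ.mul_mul_conjTranspose_same (1 - pureState v) using 1
  rw [Matrix.conjTranspose_sub, Matrix.conjTranspose_one, hPs, sub_mul, one_mul, hPσ, mul_sub,
    mul_one, sub_mul, hσP, smul_mul_assoc, hP.isIdempotentElem.eq, sub_self, sub_zero]

lemma trace_mul_pureState (hv : star v ⬝ᵥ v = 1) (hσv : σ *ᵥ v = (p : ℂ) • v) :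
    (σ * pureState v).trace = p := by
  rw [pureState_eq_vecMulVec, Matrix.mul_vecMulVec, hσv, Matrix.smul_vecMulVec,
    Matrix.trace_smul, Matrix.trace_vecMulVec, dotProduct_comm, hv, smul_eq_mul, mul_one]

lemma stateNorm_pureState_mul (hv : star v ⬝ᵥ v = 1) (A : Matrix n n ℂ) :
    stateNorm (pureState v) (pureState v * A) = ‖(pureState v * A).trace‖ := by
  have hP := isStarProjection_pureState hv
  have hPs : (pureState v)ᴴ = pureState v := hP.isSelfAdjoint
  have h : pureState v * ((pureState v * A)ᴴ * (pureState v * A)) =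
      star (pureState v * A).trace • (pureState v * A) := by
    rw [← trace_mul_conjTranspose (posSemidef_pureState v).1, ← smul_mul_assoc,
      ← pureState_mul_mul_pureState, Matrix.conjTranspose_mul, hPs]
    simp only [← mul_assoc]
    rw [mul_assoc (pureState v * Aᴴ), hP.isIdempotentElem.eq]
  rw [stateNorm, h, Matrix.trace_smul, smul_eq_mul, Complex.star_def, Complex.conj_mul',
    ← Complex.ofReal_pow, Complex.ofReal_re, Real.sqrt_sq (norm_nonneg _)]

open scoped Matrix.Norms.L2Operator

lemma norm_pureState_mul_le [DecidableEq n] (hv : star v ⬝ᵥ v = 1) (A : Matrix n n ℂ) :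
    ‖pureState v * A‖ ≤ stateNorm (pureState v) Aᴴ := by
  have hP := isStarProjection_pureState hv
  have hPs : (pureState v)ᴴ = pureState v := hP.isSelfAdjoint
  have hPAAP : (pureState v * A) * (pureState v * A)ᴴ =
      (pureState v * (Aᴴᴴ * Aᴴ)).trace • pureState v := by
    rw [← pureState_mul_mul_pureState, Matrix.conjTranspose_mul, hPs,
      Matrix.conjTranspose_conjTranspose]
    simp only [mul_assoc]
  have htr := trace_mul_conjTranspose_mul_self_nonneg (posSemidef_pureState v) Aᴴ
  refine Real.le_sqrt_of_sq_le ?_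
  calc ‖pureState v * A‖ ^ 2 = ‖(pureState v * (Aᴴᴴ * Aᴴ)).trace‖ * ‖pureState v‖ := by
        rw [← norm_smul, ← hPAAP, ← Matrix.star_eq_conjTranspose, CStarRing.norm_self_mul_star, sq]
    _ ≤ ‖(pureState v * (Aᴴᴴ * Aᴴ)).trace‖ := mul_le_of_le_one_right (norm_nonneg _) hP.norm_le
    _ = (pureState v * (Aᴴᴴ * Aᴴ)).trace.re := by
        rw [Complex.eq_re_of_ofReal_le htr, Complex.norm_real, Complex.ofReal_re,
          Real.norm_of_nonneg (Complex.le_def.1 htr).1]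

/-- With `τ = σ − p |v⟩⟨v|`, the left-hand side is `p² |⟨v|A|v⟩|²` plus a `τ`-part. The first term
is `|Tr[τ A]|²`, as `Tr[σ A] = 0`, and Cauchy–Schwarz bounds it by `Tr[τ] Tr[τ A A†]`; the second
is at most `p Tr[τ] ⟨v|A A†|v⟩`. -/
lemma mul_stateNorm_pureState_mul_sq_le (hp : 0 ≤ p) (hv : star v ⬝ᵥ v = 1)
    (hτ : (σ - (p : ℂ) • pureState v).PosSemidef) {A : Matrix n n ℂ} (hA : (σ * A).trace = 0) :
    p * stateNorm σ (pureState v * A) ^ 2 ≤ (σ.trace.re - p) * stateNorm σ Aᴴ ^ 2 := by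
  classical
  set P := pureState v with hPdef
  set τ := σ - (p : ℂ) • P with hτdef
  have hστ : σ = τ + (p : ℂ) • P := (sub_add_cancel _ _).symm
  have hP : P.PosSemidef := posSemidef_pureState v
  have htrP : P.trace = 1 := by
    rw [hPdef, pureState_eq_vecMulVec, Matrix.trace_vecMulVec, dotProduct_comm, hv]
  have htrτ : stateNorm τ 1 ^ 2 = σ.trace.re - p := by
    rw [stateNorm_sq hτ, hτdef]
    simp [htrP]
  have hτA : (τ * A).trace = -(p * (P * A).trace) := by
    rw [hτdef, sub_mul, Matrix.trace_sub, hA, smul_mul_assoc, Matrix.trace_smul, zero_sub,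
      smul_eq_mul]
  have hmean : p * ‖(P * A).trace‖ ≤ stateNorm τ 1 * stateNorm τ Aᴴ := by
    have h := norm_trace_mul_conjTranspose_mul_le hτ Aᴴ 1
    rwa [Matrix.conjTranspose_conjTranspose, mul_one, hτA, norm_neg, norm_mul, Complex.norm_real,
      Real.norm_of_nonneg hp, mul_comm (stateNorm τ Aᴴ)] at h
  have hrest : stateNorm τ (P * A) ≤ stateNorm P Aᴴ * stateNorm τ 1 := by
    have h := stateNorm_mul_le hτ (P * A) 1
    rw [mul_one] at h
    exact h.trans (mul_le_mul_of_nonneg_right (norm_pureState_mul_le hv A) (stateNorm_nonneg τ 1))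
  rw [← htrτ, hστ, stateNorm_add_smul_sq hτ hP hp, stateNorm_add_smul_sq hτ hP hp,
    stateNorm_pureState_mul hv]
  calc p * (stateNorm τ (P * A) ^ 2 + p * ‖(P * A).trace‖ ^ 2)
      = p * stateNorm τ (P * A) ^ 2 + (p * ‖(P * A).trace‖) ^ 2 := by ring
    _ ≤ p * (stateNorm P Aᴴ * stateNorm τ 1) ^ 2 + (stateNorm τ 1 * stateNorm τ Aᴴ) ^ 2 := by
      gcongr
      exact stateNorm_nonneg τ _
    _ = stateNorm τ 1 ^ 2 * (stateNorm τ Aᴴ ^ 2 + p * stateNorm P Aᴴ ^ 2) := by ring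

lemma sqrt_mul_stateNorm_pureState_mul_le (hp : 0 ≤ p) (hv : star v ⬝ᵥ v = 1)
    (hτ : (σ - (p : ℂ) • pureState v).PosSemidef) {A : Matrix n n ℂ} (hA : (σ * A).trace = 0) :
    √p * stateNorm σ (pureState v * A) ≤ √(σ.trace.re - p) * stateNorm σ Aᴴ := by
  have h := Real.sqrt_le_sqrt (mul_stateNorm_pureState_mul_sq_le hp hv hτ hA)
  rwa [Real.sqrt_mul hp, Real.sqrt_sq (stateNorm_nonneg _ _), Real.sqrt_mul' _ (sq_nonneg _),
    Real.sqrt_sq (stateNorm_nonneg _ _)] at h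

end PureState

section Entropy

variable {n : Type*} [Fintype n] [DecidableEq n] {σ : Matrix n n ℂ}

lemma sum_eigenvalues_eq_one (hσ : IsDensityMatrix σ) : ∑ i, hσ.1.1.eigenvalues i = 1 := by
  apply Complex.ofReal_injective
  rw [Complex.ofReal_sum, Complex.ofReal_one]
  exact hσ.1.1.trace_eq_sum_eigenvalues.symm.trans hσ.2

lemma exists_one_sub_eigenvalue_le_entropy (hσ : IsDensityMatrix σ) :
    ∃ i, 1 - hσ.1.1.eigenvalues i ≤ entropy σ := by
  set p := hσ.1.1.eigenvalues
  have hsum : ∑ j, p j = 1 := sum_eigenvalues_eq_one hσ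
  have hne : (Finset.univ : Finset n).Nonempty :=
    Finset.nonempty_of_sum_ne_zero (hsum.trans_ne one_ne_zero)
  obtain ⟨i, -, hmax⟩ := Finset.exists_max_image Finset.univ p hne
  refine ⟨i, ?_⟩
  calc 1 - p i = ∑ j, p j * (1 - p i) := by rw [← Finset.sum_mul, hsum, one_mul]
    _ ≤ ∑ j, -(p j * Real.log (p j)) := Finset.sum_le_sum fun j hj => ?_
    _ = entropy σ := by rw [entropy, dif_pos hσ.1.1, Finset.sum_neg_distrib]
  have hpj : 0 ≤ p j := hσ.1.eigenvalues_nonneg j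
  rcases hpj.eq_or_lt with h0 | hpos
  · simp [← h0]
  · rw [← mul_neg]
    gcongr
    linarith [hmax j hj, Real.log_le_sub_one_of_pos hpos]

lemma exists_eigenvector_one_sub_eigenvalue_le_entropy (hσ : IsDensityMatrix σ) :
    ∃ (v : n → ℂ) (p : ℝ), star v ⬝ᵥ v = 1 ∧ σ *ᵥ v = (p : ℂ) • v ∧ 0 ≤ p ∧
      1 - p ≤ entropy σ := by
  obtain ⟨i, hi⟩ := exists_one_sub_eigenvalue_le_entropy hσ
  refine ⟨hσ.1.1.eigenvectorBasis i, hσ.1.1.eigenvalues i, ?_, ?_, hσ.1.eigenvalues_nonneg i, hi⟩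
  · rw [dotProduct_comm, ← EuclideanSpace.inner_eq_star_dotProduct, inner_self_eq_norm_sq_to_K,
      hσ.1.1.eigenvectorBasis.norm_eq_one]
    simp
  · exact hσ.1.1.mulVec_eigenvectorBasis i

end Entropy

section Marginal

variable {m n : Type*} [Fintype m] [DecidableEq m] [Fintype n] [DecidableEq n]

lemma map_conjTranspose_mul_self (φ : Matrix m m ℂ →⋆ₐ[ℂ] Matrix n n ℂ) (A : Matrix m m ℂ) :
    φ (Aᴴ * A) = (φ A)ᴴ * φ A := by
  rw [map_mul, ← Matrix.star_eq_conjTranspose, map_star, Matrix.star_eq_conjTranspose]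

/-- `σ` is the marginal of `ρ` on the subsystem whose observables are embedded by `φ`: it gives them
the same expectation values. -/
def IsMarginal (φ : Matrix m m ℂ →⋆ₐ[ℂ] Matrix n n ℂ) (ρ : Matrix n n ℂ) (σ : Matrix m m ℂ) :
    Prop :=
  ∀ A, (σ * A).trace = (ρ * φ A).trace

namespace IsMarginal

variable {φ : Matrix m m ℂ →⋆ₐ[ℂ] Matrix n n ℂ} {ρ : Matrix n n ℂ} {σ : Matrix m m ℂ}

lemma stateNorm_map (h : IsMarginal φ ρ σ) (A : Matrix m m ℂ) :
    stateNorm ρ (φ A) = stateNorm σ A := by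
  rw [stateNorm, stateNorm, h, map_conjTranspose_mul_self]

lemma variance_map (h : IsMarginal φ ρ σ) (A : Matrix m m ℂ) :
    variance ρ (φ A) = variance σ A := by
  rw [variance, variance, h, h, map_conjTranspose_mul_self]

lemma centered_map (h : IsMarginal φ ρ σ) (A : Matrix m m ℂ) :
    centered ρ (φ A) = φ (centered σ A) := by
  rw [centered, centered, map_sub, map_smul, map_one, h]

lemma isHermitian (h : IsMarginal φ ρ σ) (hρ : ρ.IsHermitian) : σ.IsHermitian := by
  refine Matrix.ext_iff_trace_mul_right.2 fun A => ?_
  have hA : φ Aᴴ = (φ A)ᴴ := map_star φ A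
  rw [h, ← star_star (ρ * φ A).trace, ← trace_mul_conjTranspose hρ, ← hA, ← h,
    ← Matrix.trace_conjTranspose, Matrix.conjTranspose_mul, Matrix.conjTranspose_conjTranspose,
    Matrix.trace_mul_comm]

open scoped MatrixOrder in
lemma posSemidef (h : IsMarginal φ ρ σ) (hρ : ρ.PosSemidef) : σ.PosSemidef := by
  refine .of_dotProduct_mulVec_nonneg (h.isHermitian hρ.1) fun v => ?_
  obtain ⟨C, hC⟩ := CStarAlgebra.nonneg_iff_eq_star_mul_self.1
    (Matrix.nonneg_iff_posSemidef.2 (posSemidef_pureState v))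
  rw [dotProduct_comm, ← Matrix.trace_vecMulVec, ← Matrix.mul_vecMulVec, ← pureState_eq_vecMulVec,
    h, hC, Matrix.star_eq_conjTranspose, map_conjTranspose_mul_self]
  exact trace_mul_conjTranspose_mul_self_nonneg hρ _

lemma isDensityMatrix (h : IsMarginal φ ρ σ) (hρ : IsDensityMatrix ρ) : IsDensityMatrix σ :=
  ⟨h.posSemidef hρ.1, by rw [← mul_one σ, h, map_one, mul_one, hρ.2]⟩

open scoped Matrix.Norms.L2Operator

lemma norm_covariance_le_of_eigenvector (h : IsMarginal φ ρ σ) (hρ : IsDensityMatrix ρ)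
    {v : m → ℂ} {p : ℝ} (hp : 0 ≤ p) (hv : star v ⬝ᵥ v = 1) (hσv : σ *ᵥ v = (p : ℂ) • v)
    (A : Matrix m m ℂ) {Y : Matrix n n ℂ} (hY : ∀ B, Commute (φ B) Y) :
    ‖covariance ρ (φ A) Y‖ ≤ 2 * (‖A‖ * ‖Y‖ * √(1 - p)) := by
  have hσ := h.isDensityMatrix hρ
  have hP := isStarProjection_pureState hv
  have htr := trace_mul_pureState hv hσv
  have normP : stateNorm σ (pureState v) = √p := by
    rw [stateNorm_of_isStarProjection σ hP, htr, Complex.ofReal_re]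
  have normQ : stateNorm σ (1 - pureState v) = √(1 - p) := by
    rw [stateNorm_of_isStarProjection σ hP.one_sub]
    simp [mul_sub, htr, hσ.2]
  have normX : stateNorm σ (centered σ A) ≤ ‖A‖ := stateNorm_centered_le_norm hσ A
  have normPX : √p * stateNorm σ (pureState v * centered σ A) ≤ √(1 - p) * ‖A‖ := by
    have hfluct := sqrt_mul_stateNorm_pureState_mul_le hp hv
      (posSemidef_sub_smul_pureState hσ.1 hv hσv) (trace_mul_centered hσ.2 A)
    rw [hσ.2, Complex.one_re, conjTranspose_centered hσ.1.1] at hfluct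
    refine hfluct.trans ?_
    gcongr
    simpa only [Matrix.l2_opNorm_conjTranspose] using stateNorm_centered_le_norm hσ Aᴴ
  rw [covariance_eq_trace_centered_mul, h.centered_map]
  refine (norm_trace_mul_mul_le_of_commute hρ.1 (hP.map φ) (hY _) (hY _)).trans ?_
  rw [← map_one φ, ← map_sub, ← map_mul, h.stateNorm_map, h.stateNorm_map, h.stateNorm_map,
    h.stateNorm_map, normP, normQ]
  calc (√(1 - p) * stateNorm σ (centered σ A)
        + √p * stateNorm σ (pureState v * centered σ A)) * ‖Y‖
      ≤ (√(1 - p) * ‖A‖ + √(1 - p) * ‖A‖) * ‖Y‖ := by gcongr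
    _ = 2 * (‖A‖ * ‖Y‖ * √(1 - p)) := by ring

lemma norm_covariance_le (h : IsMarginal φ ρ σ) (hρ : IsDensityMatrix ρ) (A : Matrix m m ℂ)
    {Y : Matrix n n ℂ} (hY : ∀ B, Commute (φ B) Y) :
    ‖covariance ρ (φ A) Y‖ ≤ 2 * (‖A‖ * ‖Y‖ * √(entropy σ)) := by
  obtain ⟨v, p, hv, hσv, hp, hps⟩ :=
    exists_eigenvector_one_sub_eigenvalue_le_entropy (h.isDensityMatrix hρ)
  refine (h.norm_covariance_le_of_eigenvector hρ hp hv hσv A hY).trans ?_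
  gcongr

end IsMarginal

end Marginal

section Local

lemma forall_ne_eq_iff_eq_update {ι : Type*} [DecidableEq ι] {α : ι → Type*} {k : ι}
    {x y : ∀ j, α j} : (∀ j, j ≠ k → x j = y j) ↔ y = Function.update x k (y k) := by
  simp [Function.eq_update_iff, eq_comm]

lemma forall_ne_update_eq_iff {ι : Type*} [DecidableEq ι] {α : ι → Type*} {k : ι}
    {x y : ∀ j, α j} {a : α k} :
    (∀ j, j ≠ k → Function.update x k a j = y j) ↔ ∀ j, j ≠ k → x j = y j :=
  forall₂_congr fun j hj => by rw [Function.update_of_ne hj]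

lemma sum_ite_forall_ne_eq {M : Type*} [AddCommMonoid M] (k : Fin N) (x : ∀ j, d j)
    (f : (∀ j, d j) → M) :
    (∑ y, if ∀ j, j ≠ k → x j = y j then f y else 0) = ∑ a, f (Function.update x k a) := by
  rw [← Finset.sum_filter]
  refine Finset.sum_nbij' (· k) (Function.update x k) ?_ ?_ ?_ ?_ ?_
  · simp
  · intro a _
    simp +contextual
  · intro y hy
    exact (forall_ne_eq_iff_eq_update.1 (Finset.mem_filter.1 hy).2).symm
  · simp
  · intro y hy
    rw [← forall_ne_eq_iff_eq_update.1 (Finset.mem_filter.1 hy).2]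

lemma extendAt_mul_apply (k : Fin N) (A : Matrix (d k) (d k) ℂ)
    (M : Matrix (∀ j, d j) (∀ j, d j) ℂ) (x y : ∀ j, d j) :
    (extendAt k A * M) x y = ∑ a, A (x k) a * M (Function.update x k a) y := by
  simp only [Matrix.mul_apply, extendAt, Matrix.of_apply, ite_mul, zero_mul]
  rw [sum_ite_forall_ne_eq k x fun z => A (x k) (z k) * M z y]
  simp only [Function.update_self]

lemma mul_extendAt_apply (k : Fin N) (A : Matrix (d k) (d k) ℂ)
    (M : Matrix (∀ j, d j) (∀ j, d j) ℂ) (x y : ∀ j, d j) :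
    (M * extendAt k A) x y = ∑ a, M x (Function.update y k a) * A a (y k) := by
  simp only [Matrix.mul_apply, extendAt, Matrix.of_apply, mul_ite, mul_zero, eq_comm (b := y _)]
  rw [sum_ite_forall_ne_eq k y fun z => M x z * A (z k) (y k)]
  simp only [Function.update_self]

lemma extendAt_algebraMap (k : Fin N) (r : ℂ) :
    extendAt k (algebraMap ℂ (Matrix (d k) (d k) ℂ) r) = algebraMap ℂ _ r := by
  ext x y
  simp only [extendAt, Matrix.of_apply, Matrix.algebraMap_matrix_apply, Algebra.algebraMap_self,
    RingHom.id_apply, ← ite_and]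
  refine if_congr ⟨fun h => funext fun j => ?_, fun h => by simp [h]⟩ rfl rfl
  obtain rfl | hj := eq_or_ne j k
  exacts [h.2, h.1 j hj]

omit [∀ k, Fintype (d k)] in
lemma extendAt_conjTranspose (k : Fin N) (A : Matrix (d k) (d k) ℂ) :
    extendAt k Aᴴ = (extendAt k A)ᴴ := by
  ext x y
  simp only [extendAt, Matrix.of_apply, Matrix.conjTranspose_apply, eq_comm (a := x _),
    apply_ite star, star_zero]

/-- The embedding `extendAt k` of the operators on the `k`-th factor, as a homomorphism of
star algebras. -/
def extendAtHom (k : Fin N) :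
    Matrix (d k) (d k) ℂ →⋆ₐ[ℂ] Matrix (∀ j, d j) (∀ j, d j) ℂ where
  toFun := extendAt k
  map_one' := by simpa using extendAt_algebraMap (d := d) k 1
  map_mul' A B := by
    ext x y
    rw [extendAt_mul_apply]
    simp only [extendAt, Matrix.of_apply, forall_ne_update_eq_iff, Function.update_self,
      Matrix.mul_apply]
    split_ifs <;> simp
  map_zero' := by simpa using extendAt_algebraMap (d := d) k 0
  map_add' A B := by
    ext x y
    simp only [extendAt, Matrix.of_apply, Matrix.add_apply]
    split_ifs <;> simp
  commutes' := extendAt_algebraMap k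
  map_star' := extendAt_conjTranspose k

lemma extendAtHom_apply (k : Fin N) (A : Matrix (d k) (d k) ℂ) :
    extendAtHom k A = extendAt k A := rfl

lemma extendAt_mul_extendAt_apply {k l : Fin N} (hkl : k ≠ l) (A : Matrix (d k) (d k) ℂ)
    (B : Matrix (d l) (d l) ℂ) (x y : ∀ j, d j) :
    (extendAt k A * extendAt l B) x y =
      if ∀ j, j ≠ k → j ≠ l → x j = y j then A (x k) (y k) * B (x l) (y l) else 0 := by
  rw [extendAt_mul_apply, Finset.sum_eq_single (y k)]
  · have h : (∀ j, j ≠ l → Function.update x k (y k) j = y j) ↔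
        ∀ j, j ≠ k → j ≠ l → x j = y j := by
      refine forall_congr' fun j => ?_
      obtain rfl | hj := eq_or_ne j k
      · simp
      · simp [hj]
    simp only [extendAt, Matrix.of_apply, Function.update_of_ne hkl.symm, h, mul_ite, mul_zero]
  · intro a _ ha
    have h : ¬∀ j, j ≠ l → Function.update x k a j = y j := fun h => ha (by simpa using h k hkl)
    simp [extendAt, h]
  · simp

lemma commute_extendAt {k l : Fin N} (hkl : k ≠ l) (A : Matrix (d k) (d k) ℂ)
    (B : Matrix (d l) (d l) ℂ) : Commute (extendAt k A) (extendAt l B) := by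
  ext x y
  rw [extendAt_mul_extendAt_apply hkl, extendAt_mul_extendAt_apply hkl.symm,
    mul_comm (A _ _)]
  simp only [imp.swap (a := _ ≠ k)]

lemma isMarginal_reduce (k : Fin N) (ρ : Matrix (∀ j, d j) (∀ j, d j) ℂ) :
    IsMarginal (extendAtHom k) ρ (reduce k ρ) := by
  intro A
  calc (reduce k ρ * A).trace
      = ∑ a, ∑ b, ∑ x, if x k = a then ρ x (Function.update x k b) * A b a else 0 := by
        simp only [Matrix.trace, Matrix.diag_apply, Matrix.mul_apply, reduce, Matrix.of_apply,
          Finset.sum_mul, ite_mul, zero_mul]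
    _ = ∑ x, ∑ b, ∑ a, if x k = a then ρ x (Function.update x k b) * A b a else 0 := by
        simp only [Finset.sum_comm (s := (Finset.univ : Finset (d k)))
          (t := (Finset.univ : Finset (∀ j, d j)))]
        exact Finset.sum_congr rfl fun x _ => Finset.sum_comm
    _ = ∑ x, (ρ * extendAt k A) x x := by
        simp only [Finset.sum_ite_eq, Finset.mem_univ, if_true, mul_extendAt_apply]

end Local

section EntropyBound

open scoped Matrix.Norms.L2Operator

lemma opNorm_eq_norm {n : Type*} [Fintype n] [DecidableEq n] (A : Matrix n n ℂ) :
    opNorm A = ‖A‖ := rfl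

lemma opNorm_conjTranspose {n : Type*} [Fintype n] [DecidableEq n] (A : Matrix n n ℂ) :
    opNorm Aᴴ = opNorm A :=
  Matrix.l2_opNorm_conjTranspose A

lemma norm_extendAt_le (k : Fin N) (A : Matrix (d k) (d k) ℂ) : ‖extendAt k A‖ ≤ ‖A‖ :=
  NonUnitalStarAlgHom.norm_apply_le (extendAtHom k) A

lemma norm_covariance_extendAt_le {k l : Fin N} (hkl : k ≠ l)
    {ρ : Matrix (∀ j, d j) (∀ j, d j) ℂ} (hρ : IsDensityMatrix ρ)
    (A : Matrix (d k) (d k) ℂ) (B : Matrix (d l) (d l) ℂ) :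
    ‖covariance ρ (extendAt k A) (extendAt l B)‖ ≤
      2 * (opNorm A * opNorm B * √(entropy (reduce k ρ))) := by
  have h := (isMarginal_reduce k ρ).norm_covariance_le hρ A fun C => commute_extendAt hkl C B
  rw [opNorm_eq_norm, opNorm_eq_norm]
  refine h.trans ?_
  gcongr
  exact norm_extendAt_le l B

lemma norm_covariance_extendAt_le_min {k l : Fin N} (hkl : k ≠ l)
    {ρ : Matrix (∀ j, d j) (∀ j, d j) ℂ} (hρ : IsDensityMatrix ρ)
    (A : Matrix (d k) (d k) ℂ) (B : Matrix (d l) (d l) ℂ) :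
    ‖covariance ρ (extendAt k A) (extendAt l B)‖ ≤
      2 * (opNorm A * opNorm B * √(min (entropy (reduce k ρ)) (entropy (reduce l ρ)))) := by
  rcases min_choice (entropy (reduce k ρ)) (entropy (reduce l ρ)) with h | h <;> rw [h]
  · exact norm_covariance_extendAt_le hkl hρ A B
  · rw [covariance_comm_of_commute ρ (commute_extendAt hkl A B), mul_comm (opNorm A)]
    exact norm_covariance_extendAt_le hkl.symm hρ B A

lemma variance_reduce {ρ : Matrix (∀ j, d j) (∀ j, d j) ℂ} (hρ : ρ.IsHermitian) (k : Fin N)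
    (A : Matrix (d k) (d k) ℂ) :
    variance (reduce k ρ) A = (covariance ρ (extendAt k A)ᴴ (extendAt k A)).re := by
  rw [← variance_eq_re_covariance hρ, ← (isMarginal_reduce k ρ).variance_map, extendAtHom_apply]

lemma variance_sum_sub_sum_variance_reduce {ρ : Matrix (∀ j, d j) (∀ j, d j) ℂ}
    (hρ : ρ.IsHermitian) (G : ∀ k, Matrix (d k) (d k) ℂ) :
    variance ρ (∑ k, extendAt k (G k)) - ∑ k, variance (reduce k ρ) (G k) =
      ∑ k, ∑ l, if k ≠ l then (covariance ρ (extendAt k (G k)ᴴ) (extendAt l (G l))).re else 0 := by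
  rw [variance_eq_re_covariance hρ, Matrix.conjTranspose_sum, covariance_sum_sum,
    Complex.re_sum, ← Finset.sum_sub_distrib]
  refine Finset.sum_congr rfl fun k _ => ?_
  rw [variance_reduce hρ, Complex.re_sum, ← Finset.sum_filter, Finset.filter_ne,
    ← Finset.add_sum_erase _ _ (Finset.mem_univ k), add_sub_cancel_left]
  simp only [extendAt_conjTranspose]

end EntropyBound

/-- bound on the coherent part of the variance. For arbitrary operators
`G_k` on `H_k` and `G = Σ_k (extension of G_k to H)`, every density matrix `ρ` on `H`
satisfies `Var_ρ(G) − Σ_k Var_{ρ_k}(G_k) ≤ 2·Σ_{k≠ℓ} ‖G_k‖_∞·‖G_ℓ‖_∞·√(min(s_k, s_ℓ))`,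
the sum running over ordered pairs `(k,ℓ)` with `k ≠ ℓ`. -/
theorem coherent_variance_le_entropy_bound
    [∀ k, Nonempty (d k)]
    (G : ∀ k, Matrix (d k) (d k) ℂ)
    (ρ : Matrix (∀ j, d j) (∀ j, d j) ℂ) (hρ : IsDensityMatrix ρ) :
    variance ρ (∑ k, extendAt k (G k)) - ∑ k, variance (reduce k ρ) (G k) ≤
      2 * ∑ k, ∑ l, if k ≠ l then
        opNorm (G k) * opNorm (G l) *
          Real.sqrt (min (entropy (reduce k ρ)) (entropy (reduce l ρ)))
      else 0 := by
  rw [variance_sum_sub_sum_variance_reduce hρ.1.1]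
  simp only [Finset.mul_sum]
  refine Finset.sum_le_sum fun k _ => Finset.sum_le_sum fun l _ => ?_
  split_ifs with hkl
  · rw [← opNorm_conjTranspose (G k)]
    exact (Complex.re_le_norm _).trans (norm_covariance_extendAt_le_min hkl hρ _ _)
  · rw [mul_zero]

end Paper
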